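/- Let H be a complex Hilbert space, Ω ∈ H, and S a set of continuous linear operators on H such that the orbit {a Ω : a ∈ S} is dense in H. Let Q be a continuous linear operator on H such that for every a ∈ S, either Q(a Ω) = a(Q Ω) or Q(a Ω) = -a(Q Ω). Then all matrix elements of Q vanish, i.e. ⟨Ψ, Q Φ⟩ = 0 for all Ψ, Φ ∈ H, if and only if Q Ω = 0. -/

import Mathlib

open scoped InnerProductSpace

theorem matrix_elements_vanish_iff_annihilates_vacuum
    {H : Type*} [NormedAddCommGroup H] [InnerProductSpace ℂ H] [CompleteSpace H]
    (Ω : H) (S : Set (H →L[ℂ] H))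
    (hdense : Dense ((fun a : H →L[ℂ] H => a Ω) '' S))
    (Q : H →L[ℂ] H)
    (hcomm : ∀ a ∈ S, Q (a Ω) = a (Q Ω) ∨ Q (a Ω) = -(a (Q Ω))) :
    (∀ Ψ Φ : H, ⟪Ψ, Q Φ⟫_ℂ = 0) ↔ Q Ω = 0 := by
  constructor
  · intro h
    exact inner_self_eq_zero.mp (h (Q Ω) Ω)
  · intro h Ψ Φ
    have hQ : (Q : H → H) = fun _ => 0 := by
      refine Continuous.ext_on hdense Q.continuous continuous_const ?_
      rintro _ ⟨a, ha, rfl⟩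
      rcases hcomm a ha with h1 | h1 <;> simp [h1, h]
    rw [hQ]
    simp
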